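/- arXiv:2111.10126 — 5 statements merged into one kernel-verified Lean document; each statement's English description precedes it below -/
import Mathlib

section
/- Let t, k, ℓ be positive integers with t < k, let F be a finite field, and let b > ℓ/k be an integer. There is a black-box transformation with parameters (t, k, k₀ = binom(k,t), ℓ, F) whose associated LMSSS has all output shares in F^b (and hence information rate ℓ/(kb)) if and only if there is an F-linear code C ⊆ (F^b)^k with rate at least ℓ/(kb) and block distance at least t+1. Moreover, in the 'if' direction, the transformation can be chosen so that for every j ∈ [k], c_j = ℓ·binom(k−1,t), where c_j = Σ_{i=1}^ℓ |{v ∈ [k₀] : j ∈ ψ_i(v)}|. -/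
/-!
Both transformations and codes amount to a `t`-private linear reconstruction map `R`: whatever the
secret is, the shares of any `t` parties can be taken to be zero.

The reconstruction map of a transformation is `t`-private. For each coordinate of the secret,
security provides a summand that a given coalition of size `t` never sees; changing the secret
through these summands alone leaves the coalition's shares fixed. Conversely, given a `t`-private
`R`, let the `T v` be the `t`-sets of parties, and hand summand `v` to all parties outside `T v`
(CNF sharing). They convert it by a linear section of `R` whose shares vanish on `T v`, so the
parties in `T v` do not need it.

Transposing the matrix of `R` turns privacy into erasure correction: `R` is onto when restricted
to the share vectors vanishing on `T` iff no nonzero message of the transposed encoder has a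
codeword supported on `T`.
-/

open scoped BigOperators

/-- A black-box transformation for `(t, k, k₀, ℓ, F)` with a given replication function `ψ`
and given LMSSS share sizes `bs`: there is a `k`-party `ℓ`-LMSSS `L = (Share_L, Rec_L)`
over `F` (linear sharing and reconstruction with `Rec_L (Share_L x r) = x`) and conversion
functions `φ_j` (from party `j`'s view `(y_i^{(v)})_{i, v : j ∈ ψ i v}` to `F^{bs j}`) such
that (correctness) for every matrix `(y_i^{(v)})` the converted shares form a valid
`L`-sharing of the sums `(∑_v y_i^{(v)})_i`, and (security) for every coalition
`T ⊆ [k]` with `|T| ≤ t` and every `i`, `|⋃_{j∈T} {v : j ∈ ψ i v}| ≤ k₀ − 1`. -/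
def IsBBTWith (F : Type) [Field F] [Fintype F] (t k k₀ ℓ : ℕ) (bs : Fin k → ℕ)
    (ψ : Fin ℓ → Fin k₀ → Finset (Fin k)) : Prop :=
  ∃ (e : ℕ)
    (ShareL : ((Fin ℓ → F) × (Fin e → F)) →ₗ[F] (∀ j : Fin k, Fin (bs j) → F))
    (RecL : (∀ j : Fin k, Fin (bs j) → F) →ₗ[F] (Fin ℓ → F))
    (φ : ∀ j : Fin k,
      ((i : Fin ℓ) → ({v : Fin k₀ // j ∈ ψ i v} → F)) → (Fin (bs j) → F)),
    (∀ (x : Fin ℓ → F) (r : Fin e → F), RecL (ShareL (x, r)) = x) ∧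
    (∀ y : Fin ℓ → Fin k₀ → F, ∃ r : Fin e → F,
      (fun j => φ j (fun i v => y i v.1)) = ShareL ((fun i => ∑ v, y i v), r)) ∧
    (∀ T : Finset (Fin k), T.card ≤ t → ∀ i : Fin ℓ,
      (Finset.univ.filter (fun v : Fin k₀ => ∃ j ∈ T, j ∈ ψ i v)).card ≤ k₀ - 1)

/-- An `F`-linear code `C ⊆ (F^b)^k` with `dim_F C ≥ ℓ` (rate at least `ℓ/(kb)`) and
block distance at least `dist`. -/
def IsGoodCode (F : Type) [Field F] [Fintype F] (k b ℓ dist : ℕ) : Prop :=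
  ∃ C : Submodule F (Fin k → (Fin b → F)),
    ℓ ≤ Module.finrank F C ∧
    ∀ c ∈ C, ∀ c' ∈ C, c ≠ c' → dist ≤ Nat.card {j : Fin k // c j ≠ c' j}

section Codes

variable {F ι W : Type*} {M : ι → Type*} [Semiring F] [AddCommMonoid W] [Module F W]
  [∀ j, AddCommMonoid (M j)] [∀ j, Module F (M j)]

/-- The secret sharing scheme with reconstruction map `R` is `t`-private. Since `R` is linear, this
is expressed by saying that every secret has a share vector in which any given `t` parties hold
zero. -/
def IsPrivate (t : ℕ) (R : (∀ j, M j) →ₗ[F] W) : Prop :=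
  ∀ T : Finset ι, T.card ≤ t → ∀ w, ∃ z, (∀ j ∈ T, z j = 0) ∧ R z = w

/-- The encoder `E` corrects any `t` block erasures. Since `E` is linear, this is expressed by
saying that a message whose codeword vanishes on all the surviving blocks is zero. -/
def CorrectsErasures (t : ℕ) (E : W →ₗ[F] ∀ j, M j) : Prop :=
  ∀ T : Finset ι, T.card ≤ t → ∀ x, (∀ j ∉ T, E x j = 0) → x = 0

theorem IsPrivate.surjective {t : ℕ} {R : (∀ j, M j) →ₗ[F] W} (hR : IsPrivate t R) :
    Function.Surjective R := fun w =>
  have ⟨z, _, hz⟩ := hR ∅ (Nat.zero_le t) w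
  ⟨z, hz⟩

theorem correctsErasures_iff_lt_hammingNorm [Fintype ι] [∀ j, DecidableEq (M j)] {t : ℕ}
    {E : W →ₗ[F] ∀ j, M j} :
    CorrectsErasures t E ↔ ∀ x, x ≠ 0 → t < hammingNorm (E x) := by
  constructor
  · intro hE x hx
    by_contra! hle
    exact hx (hE _ hle x fun j hj => by simpa using hj)
  · intro hE T hT x hx
    by_contra hne
    refine (hE x hne).not_ge ((Finset.card_le_card fun j hj => ?_).trans hT)
    by_contra hjT
    exact (Finset.mem_filter.mp hj).2 (hx j hjT)

end Codes

section Duality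

open scoped Matrix

variable {F m n ι κ : Type*} [Field F]

theorem submodule_eq_top_of_dotProduct_eq_zero [Fintype m] {U : Submodule F (m → F)}
    (hU : ∀ x : m → F, (∀ w ∈ U, x ⬝ᵥ w = 0) → x = 0) : U = ⊤ := by
  classical
  by_contra hne
  obtain ⟨f, hf, hUf⟩ := U.exists_le_ker_of_lt_top (lt_top_iff_ne_top.mpr hne)
  obtain ⟨x, rfl⟩ := (dotProductEquiv F m).surjective f
  exact hf (by rw [hU x fun w hw => hUf hw, map_zero])

theorem exists_mulVec_eq_iff_vecMul_eq_zero [Fintype m] [Fintype n] (G : Matrix m n F)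
    (S : Set n) :
    (∀ w, ∃ z, (∀ p ∈ S, z p = 0) ∧ G *ᵥ z = w) ↔
      ∀ x, (∀ p ∉ S, (x ᵥ* G) p = 0) → x = 0 := by
  classical
  constructor
  · intro hG x hx
    refine dotProduct_eq_zero x fun w => ?_
    obtain ⟨z, hz, rfl⟩ := hG w
    rw [Matrix.dotProduct_mulVec]
    refine Finset.sum_eq_zero fun p _ => ?_
    by_cases hp : p ∈ S
    · rw [hz p hp, mul_zero]
    · rw [hx p hp, zero_mul]
  · intro hG
    let U := (Submodule.pi S fun _ => (⊥ : Submodule F F)).map G.mulVecLin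
    have hU : U = ⊤ := submodule_eq_top_of_dotProduct_eq_zero fun x hx => hG x fun p hp => by
      have hsingle : Pi.single p 1 ∈ Submodule.pi S fun _ => (⊥ : Submodule F F) :=
        fun q hq => Pi.single_eq_of_ne (ne_of_mem_of_not_mem hq hp) 1
      have hdot := hx _ (Submodule.mem_map_of_mem hsingle)
      rwa [Matrix.mulVecLin_apply, Matrix.dotProduct_mulVec, dotProduct_single_one] at hdot
    intro w
    obtain ⟨z, hz, hzw⟩ := Submodule.mem_map.mp (hU ▸ Submodule.mem_top : w ∈ U)
    exact ⟨z, hz, hzw⟩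

theorem isPrivate_mulVec_iff_correctsErasures_vecMul [Fintype m] [Fintype ι] [Fintype κ] {t : ℕ}
    (G : Matrix m (ι × κ) F) :
    IsPrivate t (G.mulVecLin ∘ₗ (LinearEquiv.curry F F ι κ).symm.toLinearMap) ↔
      CorrectsErasures t ((LinearEquiv.curry F F ι κ).toLinearMap ∘ₗ G.vecMulLinear) := by
  refine forall₂_congr fun T _ => ?_
  have hdual := exists_mulVec_eq_iff_vecMul_eq_zero G (Prod.fst ⁻¹' (T : Set ι))
  simp only [(LinearEquiv.curry F F ι κ).surjective.exists, funext_iff]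
  simpa [funext_iff, imp_forall_iff] using hdual

theorem exists_isPrivate_iff_exists_correctsErasures [Finite m] [Finite ι] [Finite κ] {t : ℕ} :
    (∃ R : (ι → κ → F) →ₗ[F] (m → F), IsPrivate t R) ↔
      ∃ E : (m → F) →ₗ[F] (ι → κ → F), CorrectsErasures t E := by
  classical
  cases nonempty_fintype m
  cases nonempty_fintype ι
  cases nonempty_fintype κ
  let γ := LinearEquiv.curry F F ι κ
  constructor
  · rintro ⟨R, hR⟩
    obtain ⟨G, rfl⟩ : ∃ G : Matrix m (ι × κ) F, G.mulVecLin ∘ₗ γ.symm.toLinearMap = R := by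
      refine ⟨LinearMap.toMatrix' (R ∘ₗ γ.toLinearMap), LinearMap.ext fun z => ?_⟩
      simp
    exact ⟨_, (isPrivate_mulVec_iff_correctsErasures_vecMul G).mp hR⟩
  · rintro ⟨E, hE⟩
    obtain ⟨G, rfl⟩ : ∃ G : Matrix m (ι × κ) F, γ.toLinearMap ∘ₗ G.vecMulLinear = E := by
      refine ⟨LinearMap.toMatrixRight' (γ.symm.toLinearMap ∘ₗ E), LinearMap.ext fun x => ?_⟩
      have hvecMul := LinearMap.congr_fun
        (LinearMap.toMatrixRight'.symm_apply_apply (γ.symm.toLinearMap ∘ₗ E)) x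
      exact (γ.symm_apply_eq.mp hvecMul.symm).symm
    exact ⟨_, (isPrivate_mulVec_iff_correctsErasures_vecMul G).mpr hE⟩

end Duality

section GoodCode

variable {F : Type} [Field F] [Fintype F] {t k ℓ b : ℕ}

theorem isGoodCode_iff_le_hammingNorm [DecidableEq F] {d : ℕ} :
    IsGoodCode F k b ℓ d ↔ ∃ C : Submodule F (Fin k → Fin b → F),
      ℓ ≤ Module.finrank F C ∧ ∀ c ∈ C, c ≠ 0 → d ≤ hammingNorm c := by
  have hcard (c c' : Fin k → Fin b → F) :
      Nat.card {j // c j ≠ c' j} = hammingNorm (c - c') := by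
    rw [Nat.card_eq_fintype_card, Fintype.card_subtype]
    simp [hammingNorm, sub_eq_zero]
  refine exists_congr fun C => and_congr_right fun _ => ⟨fun hC c hc hne => ?_,
    fun hC c hc c' hc' hne => ?_⟩
  · simpa only [hcard, sub_zero] using hC c hc 0 C.zero_mem hne
  · exact hcard c c' ▸ hC _ (C.sub_mem hc hc') (sub_ne_zero.mpr hne)

theorem isGoodCode_iff_exists_correctsErasures :
    IsGoodCode F k b ℓ (t + 1) ↔
      ∃ E : (Fin ℓ → F) →ₗ[F] (Fin k → Fin b → F), CorrectsErasures t E := by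
  classical
  simp only [isGoodCode_iff_le_hammingNorm, correctsErasures_iff_lt_hammingNorm,
    Nat.succ_le_iff]
  constructor
  · rintro ⟨C, hdim, hC⟩
    obtain ⟨f, hf⟩ : ∃ f : (Fin ℓ → F) →ₗ[F] C, Function.Injective f :=
      finrank_le_iff_exists_linearMap.mp (by simpa using hdim)
    exact ⟨C.subtype ∘ₗ f, fun x hx => hC _ (f x).2 (by simpa [map_eq_zero_iff f hf] using hx)⟩
  · rintro ⟨E, hE⟩
    have hinj : Function.Injective E := by
      refine (injective_iff_map_eq_zero E).mpr fun x hx => ?_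
      by_contra hne
      simpa [hx] using hE x hne
    refine ⟨LinearMap.range E, by simp [LinearMap.finrank_range_of_inj hinj], ?_⟩
    rintro _ ⟨x, rfl⟩ hne
    exact hE x (ne_of_apply_ne E (by simpa using hne))

end GoodCode

section Sharing

variable {F W : Type*} [Field F] [AddCommGroup W] [Module F W]

theorem exists_linear_sharing {V : Type*} [AddCommGroup V] [Module F V] [FiniteDimensional F V]
    {R : V →ₗ[F] W} (hR : Function.Surjective R) :
    ∃ (e : ℕ) (S : (W × (Fin e → F)) →ₗ[F] V),
      (∀ x r, R (S (x, r)) = x) ∧ ∀ z, ∃ r, S (R z, r) = z := by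
  obtain ⟨s, hs⟩ := R.exists_rightInverse_of_surjective (LinearMap.range_eq_top.mpr hR)
  have hRs (x : W) : R (s x) = x := LinearMap.congr_fun hs x
  let θ := (Module.finBasis F (LinearMap.ker R)).equivFun
  refine ⟨_, s.coprod ((LinearMap.ker R).subtype ∘ₗ θ.symm.toLinearMap), fun x r => ?_,
    fun z => ⟨θ ⟨z - s (R z), ?_⟩, ?_⟩⟩
  · simp [hRs, -Module.Basis.equivFun_symm_apply]
  · simp [hRs]
  · simp [-Module.Basis.equivFun_symm_apply]

theorem IsPrivate.exists_section {ι : Type*} {M : ι → Type*} [∀ j, AddCommGroup (M j)]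
    [∀ j, Module F (M j)] {t : ℕ} {R : (∀ j, M j) →ₗ[F] W}
    (hR : IsPrivate t R) {T : Finset ι} (hT : T.card ≤ t) :
    ∃ s : W →ₗ[F] ∀ j, M j, (∀ x, R (s x) = x) ∧ ∀ x, ∀ j ∈ T, s x j = 0 := by
  let V₀ : Submodule F (∀ j, M j) := Submodule.pi T fun _ => ⊥
  have hsurj : Function.Surjective (R.domRestrict V₀) := fun w =>
    have ⟨z, hz, hzw⟩ := hR T hT w
    ⟨⟨z, hz⟩, hzw⟩
  obtain ⟨g, hg⟩ :=
    (R.domRestrict V₀).exists_rightInverse_of_surjective (LinearMap.range_eq_top.mpr hsurj)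
  exact ⟨V₀.subtype ∘ₗ g, LinearMap.congr_fun hg, fun x => (g x).2⟩

end Sharing

section Counting

theorem card_filter_le_card_sub_one_iff {α : Type*} [Fintype α] [Nonempty α] {p : α → Prop}
    [DecidablePred p] :
    (Finset.univ.filter p).card ≤ Fintype.card α - 1 ↔ ∃ a, ¬ p a := by
  rw [← Nat.lt_iff_le_pred Fintype.card_pos, Finset.card_lt_iff_ne_univ]
  simp [Finset.ext_iff]

variable {ι κ : Type*} [Fintype ι] {t : ℕ}

theorem exists_subset_of_equiv_card_eq (ε : κ ≃ {T : Finset ι // T.card = t})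
    (ht : t ≤ Fintype.card ι) {A : Finset ι} (hA : A.card ≤ t) : ∃ v, A ⊆ ε v := by
  obtain ⟨T, hAT, hT⟩ := Finset.exists_superset_card_eq hA ht
  exact ⟨ε.symm ⟨T, hT⟩, by simpa using hAT⟩

theorem card_filter_mem_compl_of_equiv_card_eq [DecidableEq ι] [Fintype κ]
    (ε : κ ≃ {T : Finset ι // T.card = t}) (j : ι) :
    (Finset.univ.filter fun v => j ∈ (ε v : Finset ι)ᶜ).card =
      (Fintype.card ι - 1).choose t := by
  let f : κ ↪ Finset ι := ε.toEmbedding.trans (Function.Embedding.subtype _)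
  have hmap : (Finset.univ.filter fun v => j ∈ (ε v : Finset ι)ᶜ).map f =
      Finset.powersetCard t (Finset.univ.erase j) := by
    ext T
    simp only [Finset.mem_map, Finset.mem_filter_univ, Finset.mem_compl, Finset.mem_powersetCard,
      Finset.subset_erase, Finset.subset_univ, true_and]
    constructor
    · rintro ⟨v, hv, rfl⟩
      exact ⟨hv, (ε v).2⟩
    · rintro ⟨hj, hT⟩
      exact ⟨ε.symm ⟨T, hT⟩, by simpa, by simp [f]⟩
  rw [← Finset.card_map f, hmap, Finset.card_powersetCard, Finset.card_erase_of_mem (by simp),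
    Finset.card_univ]

end Counting

section Transformation

variable {F : Type} [Field F] [Fintype F] {t k k₀ ℓ : ℕ} {bs : Fin k → ℕ}

theorem IsBBTWith.exists_isPrivate [NeZero k₀] {ψ : Fin ℓ → Fin k₀ → Finset (Fin k)}
    (h : IsBBTWith F t k k₀ ℓ bs ψ) :
    ∃ R : (∀ j, Fin (bs j) → F) →ₗ[F] (Fin ℓ → F), IsPrivate t R := by
  obtain ⟨e, S, R, φ, hR, hφ, hsec⟩ := h
  let shares (y : Fin ℓ → Fin k₀ → F) : ∀ j, Fin (bs j) → F := fun j => φ j fun i v => y i v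
  have hshares (y : Fin ℓ → Fin k₀ → F) : R (shares y) = fun i => ∑ v, y i v := by
    obtain ⟨r, hr⟩ := hφ y
    rw [← hR (fun i => ∑ v, y i v) r, ← hr]
  refine ⟨R, fun T hT w => ?_⟩
  have hunseen (i : Fin ℓ) : ∃ v, ∀ j ∈ T, j ∉ ψ i v := by
    simpa using card_filter_le_card_sub_one_iff.mp ((hsec T hT i).trans_eq (by simp))
  choose v hv using hunseen
  refine ⟨shares (fun i => Pi.single (v i) (w i)) - shares 0, fun j hj => ?_, ?_⟩
  · refine sub_eq_zero.mpr (congrArg (φ j) ?_)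
    funext i u
    exact Pi.single_eq_of_ne (ne_of_mem_of_not_mem (s := {v | j ∈ ψ i v}) u.2 (hv i j hj)) _
  · ext i
    simp [hshares]

theorem IsPrivate.isBBTWith_compl {R : (∀ j, Fin (bs j) → F) →ₗ[F] (Fin ℓ → F)}
    (hR : IsPrivate t R) {T : Fin k₀ → Finset (Fin k)} (hT : ∀ v, (T v).card ≤ t)
    (hcover : ∀ A : Finset (Fin k), A.card ≤ t → ∃ v, A ⊆ T v) :
    IsBBTWith F t k k₀ ℓ bs fun _ v => (T v)ᶜ := by
  obtain ⟨e, S, hRS, hSR⟩ := exists_linear_sharing hR.surjective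
  choose s hRs hs using fun v => hR.exists_section (hT v)
  refine ⟨e, S, R, fun j Y => ∑ v, if hj : j ∈ (T v)ᶜ then s v (fun i => Y i ⟨v, hj⟩) j else 0,
    hRS, fun y => ?_, fun A hA i => ?_⟩
  · let z := ∑ v, s v fun i => y i v
    have hRz : R z = fun i => ∑ v, y i v := by
      funext i
      simp [z, hRs]
    obtain ⟨r, hr⟩ := hSR z
    refine ⟨r, ?_⟩
    rw [← hRz, hr]
    funext j
    rw [show z j = ∑ v, s v (fun i => y i v) j from Finset.sum_apply j _ _]
    refine Finset.sum_congr rfl fun v _ => ?_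
    split_ifs with hj
    · rfl
    · exact (hs v _ j (by simpa using hj)).symm
  · obtain ⟨v, hv⟩ := hcover A hA
    have : Nonempty (Fin k₀) := ⟨v⟩
    refine (card_filter_le_card_sub_one_iff.mpr ⟨v, ?_⟩).trans_eq (by simp)
    rintro ⟨j, hjA, hj⟩
    exact Finset.mem_compl.mp hj (hv hjA)

theorem IsPrivate.exists_isBBTWith_choose {R : (∀ j, Fin (bs j) → F) →ₗ[F] (Fin ℓ → F)}
    (hR : IsPrivate t R) (htk : t ≤ k) :
    ∃ ψ : Fin ℓ → Fin (k.choose t) → Finset (Fin k), IsBBTWith F t k (k.choose t) ℓ bs ψ ∧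
      ∀ j, ∑ i, (Finset.univ.filter fun v => j ∈ ψ i v).card = ℓ * (k - 1).choose t := by
  let ε : Fin (k.choose t) ≃ {T : Finset (Fin k) // T.card = t} :=
    (Fintype.equivFinOfCardEq (by simp)).symm
  refine ⟨fun _ v => (ε v : Finset (Fin k))ᶜ, hR.isBBTWith_compl (fun v => (ε v).2.le)
    fun A hA => exists_subset_of_equiv_card_eq ε (by simpa using htk) hA, fun j => ?_⟩
  simp only [card_filter_mem_compl_of_equiv_card_eq, Finset.sum_const, Finset.card_univ,
    Fintype.card_fin, smul_eq_mul]

end Transformation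

/-- **Black-box transformations with `k₀ = binom(k,t)` are captured by linear codes.**
There is a black-box transformation for `(t, k, k₀ = binom(k,t), ℓ, F)` whose LMSSS has all
shares in `F^b` (hence information rate `ℓ/(kb)`) iff there is an `F`-linear code
`C ⊆ (F^b)^k` with dimension at least `ℓ` and block distance at least `t+1`; moreover, in
the "if" direction the transformation can be chosen with `c_j = ℓ·binom(k−1,t)` for every
`j ∈ [k]`. -/
theorem blackbox_large_k0_iff_code (F : Type) [Field F] [Fintype F]
    (t k ℓ b : ℕ) (ht : 0 < t) (hk : 0 < k) (hℓ : 0 < ℓ) (htk : t < k) (hb : ℓ < b * k) :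
    ((∃ ψ : Fin ℓ → Fin (k.choose t) → Finset (Fin k),
        IsBBTWith F t k (k.choose t) ℓ (fun _ => b) ψ) ↔
      IsGoodCode F k b ℓ (t + 1)) ∧
    (IsGoodCode F k b ℓ (t + 1) →
      ∃ ψ : Fin ℓ → Fin (k.choose t) → Finset (Fin k),
        IsBBTWith F t k (k.choose t) ℓ (fun _ => b) ψ ∧
        ∀ j : Fin k,
          (∑ i : Fin ℓ,
            (Finset.univ.filter (fun v : Fin (k.choose t) => j ∈ ψ i v)).card) =
            ℓ * (k - 1).choose t) := by
  have hcode : IsGoodCode F k b ℓ (t + 1) ↔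
      ∃ R : (Fin k → Fin b → F) →ₗ[F] (Fin ℓ → F), IsPrivate t R :=
    isGoodCode_iff_exists_correctsErasures.trans exists_isPrivate_iff_exists_correctsErasures.symm
  rw [hcode]
  have : NeZero (k.choose t) := ⟨(Nat.choose_pos htk.le).ne'⟩
  exact ⟨⟨fun ⟨_, hψ⟩ => hψ.exists_isPrivate,
      fun ⟨_, hR⟩ => (hR.exists_isBBTWith_choose htk.le).imp fun _ hψ => hψ.1⟩,
    fun ⟨_, hR⟩ => hR.exists_isBBTWith_choose htk.le⟩
end

section
/- Let k ≥ 2 be an integer and F a finite field. There is a black-box transformation with parameters (t = 1, k, k₀ = 2, ℓ = k−1, F) and rate 1 − 1/k. Furthermore, the transformation can be chosen so that for every j ∈ [k], c_j = k−1, where c_j = Σ_{i=1}^ℓ |{v ∈ [k₀] : j ∈ ψ_i(v)}|. -/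
/-!
Write `k = n + 1` with parties `0, …, n`. Of the additive shares `y i 0` and `y i 1` of the `i`-th
secret, the first goes to party `i + 1` alone and the second to everybody else, so each party
holds exactly one share of each secret. Put `S = ∑ m, y m 1`. Party `0` holds all the `y m 1` and
outputs their sum `S`; party `i + 1` holds `y i 0` and all the `y m 1` with `m ≠ i`, and outputs
`y i 0 - ∑ m ≠ i, y m 1 = (y i 0 + y i 1) - S`. Hence the outputs are the sharing
`(S, x 0 - S, …, x (n - 1) - S)` of the sums `x i = y i 0 + y i 1`, in which `S` plays the role of
the randomness and each `x i` is recovered by adding the shares of the parties `0` and `i + 1`.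
-/

open scoped BigOperators

/-- Black-box transformations, as in `IsBBTWith`, with secrets, randomness and shares taking values
in an `R`-module `M` instead of a finite field, and with `R`-linear sharing and
reconstruction; the sizes `bs` count copies of `M`. -/
def IsModuleBBTWith (R M : Type*) [Semiring R] [AddCommMonoid M] [Module R M] (t k k₀ ℓ : ℕ)
    (bs : Fin k → ℕ) (ψ : Fin ℓ → Fin k₀ → Finset (Fin k)) : Prop :=
  ∃ (e : ℕ)
    (share : ((Fin ℓ → M) × (Fin e → M)) →ₗ[R] (∀ j : Fin k, Fin (bs j) → M))
    (reconstruct : (∀ j : Fin k, Fin (bs j) → M) →ₗ[R] (Fin ℓ → M))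
    (φ : ∀ j : Fin k,
      ((i : Fin ℓ) → ({v : Fin k₀ // j ∈ ψ i v} → M)) → (Fin (bs j) → M)),
    (∀ (x : Fin ℓ → M) (r : Fin e → M), reconstruct (share (x, r)) = x) ∧
    (∀ y : Fin ℓ → Fin k₀ → M, ∃ r : Fin e → M,
      (fun j => φ j (fun i v => y i v.1)) = share ((fun i => ∑ v, y i v), r)) ∧
    (∀ T : Finset (Fin k), T.card ≤ t → ∀ i : Fin ℓ,
      (Finset.univ.filter (fun v : Fin k₀ => ∃ j ∈ T, j ∈ ψ i v)).card ≤ k₀ - 1)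

section SingleShareReplication

variable {ι P V : Type*} [Fintype P] [DecidableEq V]

/-- The replication function in which party `j` holds, of the additive shares of the secret `i`,
the one indexed by `σ i j` and no other. -/
def singleShareReplication (σ : ι → P → V) (i : ι) (v : V) : Finset P :=
  {j | σ i j = v}

@[simp]
lemma mem_singleShareReplication {σ : ι → P → V} {i : ι} {v : V} {j : P} :
    j ∈ singleShareReplication σ i v ↔ σ i j = v := by
  simp [singleShareReplication]

variable [Fintype V]

lemma card_shares_singleShareReplication [DecidableEq P] (σ : ι → P → V) (i : ι) (j : P) :
    (Finset.univ.filter fun v => j ∈ singleShareReplication σ i v).card = 1 :=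
  Finset.card_eq_one.2 ⟨σ i j, by ext v; simp [eq_comm]⟩

lemma card_coalition_shares_singleShareReplication_le (σ : ι → P → V) (i : ι) (T : Finset P)
    [DecidablePred fun v => ∃ j ∈ T, j ∈ singleShareReplication σ i v] :
    (Finset.univ.filter fun v => ∃ j ∈ T, j ∈ singleShareReplication σ i v).card ≤ T.card := by
  have shares_eq_image :
      (Finset.univ.filter fun v => ∃ j ∈ T, j ∈ singleShareReplication σ i v) = T.image (σ i) := by
    ext v
    simp
  exact shares_eq_image ▸ Finset.card_image_le

end SingleShareReplication

/-- The index of the additive share of the `i`-th secret held by party `j`: the first one if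
`j = i + 1`, and the second one otherwise. -/
def starIndex {n : ℕ} (i : Fin n) (j : Fin (n + 1)) : Fin 2 :=
  if j = i.succ then 0 else 1

lemma starIndex_succ_self {n : ℕ} (i : Fin n) : starIndex i i.succ = 0 :=
  if_pos rfl

lemma starIndex_of_ne {n : ℕ} {i : Fin n} {j : Fin (n + 1)} (h : j ≠ i.succ) :
    starIndex i j = 1 :=
  if_neg h

section StarScheme

variable (R : Type*) {M : Type*} [Semiring R] [AddCommGroup M] [Module R M] {n : ℕ}

/-- The sharing map `(x, r) ↦ (r, x 0 - r, …, x (n - 1) - r)` with one module element per party. -/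
def starShare : ((Fin n → M) × (Fin 1 → M)) →ₗ[R] (Fin (n + 1) → Fin 1 → M) where
  toFun p := Fin.cons p.2 fun i a => p.1 i - p.2 a
  map_add' _ _ := funext <| Fin.cases rfl fun _ => funext fun _ => add_sub_add_comm _ _ _ _
  map_smul' c p := funext <| Fin.cases rfl fun i => funext fun a =>
    (smul_sub c (p.1 i) (p.2 a)).symm

@[simp]
lemma starShare_zero (x : Fin n → M) (r : Fin 1 → M) : starShare R (x, r) 0 = r := rfl

@[simp]
lemma starShare_succ (x : Fin n → M) (r : Fin 1 → M) (i : Fin n) (a : Fin 1) :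
    starShare R (x, r) i.succ a = x i - r a := rfl

/-- The reconstruction map of `starShare`. -/
def starReconstruct : (Fin (n + 1) → Fin 1 → M) →ₗ[R] (Fin n → M) where
  toFun z i := z i.succ 0 + z 0 0
  map_add' _ _ := funext fun _ => add_add_add_comm _ _ _ _
  map_smul' c z := funext fun i => (smul_add c (z i.succ 0) (z 0 0)).symm

lemma starReconstruct_starShare (x : Fin n → M) (r : Fin 1 → M) :
    starReconstruct R (starShare R (x, r)) = x := by
  ext i
  simp [starReconstruct]

/-- `starConvert u j` is the converted share of party `j`, where `u i` is the one additive share of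
the secret `i` that party `j` holds; the other entries of `starConvert u` have no meaning. -/
def starConvert (u : Fin n → M) : Fin (n + 1) → M :=
  Fin.cons (∑ m, u m) fun i => u i - ∑ m ∈ {i}ᶜ, u m

lemma starConvert_starIndex_zero (y : Fin n → Fin 2 → M) :
    starConvert (fun i => y i (starIndex i 0)) 0 = ∑ m, y m 1 := by
  simp [starConvert, starIndex_of_ne (Fin.succ_ne_zero _).symm]

lemma starConvert_starIndex_succ (y : Fin n → Fin 2 → M) (i : Fin n) :
    starConvert (fun m => y m (starIndex m i.succ)) i.succ = ∑ v, y i v - ∑ m, y m 1 := by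
  have other_shares : ∑ m ∈ {i}ᶜ, y m (starIndex m i.succ) = ∑ m ∈ {i}ᶜ, y m 1 :=
    Finset.sum_congr rfl fun m hm => by
      have succ_ne_succ : i.succ ≠ m.succ := by simpa [eq_comm] using hm
      rw [starIndex_of_ne succ_ne_succ]
  calc starConvert (fun m => y m (starIndex m i.succ)) i.succ
    _ = y i 0 - ∑ m ∈ {i}ᶜ, y m 1 := by
      rw [starConvert, Fin.cons_succ, other_shares, starIndex_succ_self]
    _ = y i 0 + y i 1 - (y i 1 + ∑ m ∈ {i}ᶜ, y m 1) := by abel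
    _ = ∑ v, y i v - ∑ m, y m 1 := by
      rw [Fin.sum_univ_two, Fintype.sum_eq_add_sum_compl i fun m => y m 1]

lemma starConvert_starIndex_eq_starShare (y : Fin n → Fin 2 → M) :
    (fun j (_ : Fin 1) => starConvert (fun i => y i (starIndex i j)) j) =
      starShare R (fun i => ∑ v, y i v, fun _ => ∑ m, y m 1) := by
  ext j a
  cases j using Fin.cases with
  | zero => simp [starConvert_starIndex_zero]
  | succ i => simp only [starConvert_starIndex_succ, starShare_succ]

variable (M) in
theorem isModuleBBTWith_star (n : ℕ) :
    IsModuleBBTWith R M 1 (n + 1) 2 n (fun _ => 1) (singleShareReplication starIndex) :=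
  ⟨1, starShare R, starReconstruct R,
    fun j w _ => starConvert (fun i => w i ⟨starIndex i j, mem_singleShareReplication.2 rfl⟩) j,
    starReconstruct_starShare R,
    fun y => ⟨fun _ => ∑ m, y m 1, starConvert_starIndex_eq_starShare R y⟩,
    fun T hT i => (card_coalition_shares_singleShareReplication_le starIndex i T).trans hT⟩

end StarScheme

theorem blackbox_k0_two_general (R M : Type*) [Semiring R] [AddCommGroup M] [Module R M]
    (k : ℕ) (hk : 0 < k) :
    ∃ (bs : Fin k → ℕ) (ψ : Fin (k - 1) → Fin 2 → Finset (Fin k)),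
      IsModuleBBTWith R M 1 k 2 (k - 1) bs ψ ∧
      ((k - 1 : ℕ) : ℚ) / (∑ j, (bs j : ℚ)) = 1 - 1 / (k : ℚ) ∧
      ∀ j : Fin k,
        (∑ i : Fin (k - 1),
          (Finset.univ.filter (fun v : Fin 2 => j ∈ ψ i v)).card) = k - 1 := by
  obtain ⟨n, rfl⟩ := Nat.exists_eq_add_of_le' hk
  refine ⟨fun _ => 1, singleShareReplication starIndex, isModuleBBTWith_star R M n, ?_, fun j => ?_⟩
  · rw [one_sub_div (Nat.cast_ne_zero.2 hk.ne')]
    simp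
  · simp [card_shares_singleShareReplication, -mem_singleShareReplication]

/-- **Optimal black-box transformations with `k₀ = 2`.**
For every integer `k ≥ 2` and finite field `F`, there is a black-box transformation with
parameters `(t = 1, k, k₀ = 2, ℓ = k − 1, F)` and rate `1 − 1/k`; moreover, it can be
chosen so that `c_j = k − 1` for every `j ∈ [k]`. -/
theorem blackbox_k0_two (F : Type) [Field F] [Fintype F] (k : ℕ) (hk : 2 ≤ k) :
    ∃ (bs : Fin k → ℕ) (ψ : Fin (k - 1) → Fin 2 → Finset (Fin k)),
      IsBBTWith F 1 k 2 (k - 1) bs ψ ∧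
      ((k - 1 : ℕ) : ℚ) / (∑ j, (bs j : ℚ)) = 1 - 1 / (k : ℚ) ∧
      ∀ j : Fin k,
        (∑ i : Fin (k - 1),
          (Finset.univ.filter (fun v : Fin 2 => j ∈ ψ i v)).card) = k - 1 :=
  blackbox_k0_two_general F F k (by omega)
end

section
/- Let k₀ < q be positive integers and F a finite field. Suppose 𝒮 is a family of (k₀−1)-element subsets of [q] such that any two distinct sets S₁, S₂ ∈ 𝒮 satisfy |S₁ ∩ S₂| ≤ 1. Then there is a black-box transformation with parameters (t = k₀−1, k = q + |𝒮|, k₀, ℓ = |𝒮|, F) and rate 1 − q/(q + |𝒮|). Furthermore, the transformation can be chosen so that for every j ∈ [q + |𝒮|], c_j ≤ |𝒮|, where c_j = Σ_{i=1}^ℓ |{v ∈ [k₀] : j ∈ ψ_i(v)}|. -/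
/-!
There is one party for each point of `[q]` and one for each block. The secret-sharing scheme draws
a random field element `r p` for each point `p`; it gives `r p` to the party of `p`, and
`x m - ∑ p ∈ S m, r p` to the party of the block `S m`. Each share is a single field element, hence
the rate `ℓ / (q + ℓ)`.

As `k₀ ≤ |S i| + 1`, the `k₀` additive shares of the `i`-th secret can be labelled injectively by
the points of `S i` and one extra label `none`. The party of a point `p` is given all additive
shares with label `p` and takes their sum as its `r p`. The share of the party of the block `S m`
is then forced: it is the additive share of the `m`-th secret with label `none`, minus all additive
shares of the other secrets whose labels lie in `S m`, so these are what that party is given. For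
`i ≠ m` at most one label of the `i`-th secret lies in `S m`, because `|S i ∩ S m| ≤ 1`. Thus every
party sees at most one additive share of each secret, which yields both security and `c_j ≤ ℓ`.
-/

open scoped BigOperators

section Scheme

open Finset

variable (R : Type*) {P ι : Type*} [Ring R]

/-- The sharing map of the linear multi-secret sharing scheme attached to a family of blocks `S i`
of points: the parties are the points `P` and the block indices `ι`, and the randomness is one
element of `R` per point. -/
def packingShare (S : ι → Finset P) : ((ι → R) × (P → R)) →ₗ[R] (P ⊕ ι → R) where
  toFun xr := Sum.elim xr.2 fun m => xr.1 m - ∑ p ∈ S m, xr.2 p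
  map_add' a b := by
    ext (p | m)
    · rfl
    · simp [sum_add_distrib, add_sub_add_comm]
  map_smul' c a := by
    ext (p | m)
    · rfl
    · simp [← mul_sum, mul_sub]

/-- The reconstruction map of the scheme `packingShare`. -/
def packingRec (S : ι → Finset P) : (P ⊕ ι → R) →ₗ[R] (ι → R) where
  toFun s m := s (.inr m) + ∑ p ∈ S m, s (.inl p)
  map_add' a b := by
    ext m
    simp [sum_add_distrib, add_add_add_comm]
  map_smul' c a := by
    ext m
    simp [← mul_sum, mul_add]

variable {R}

lemma packingShare_apply (S : ι → Finset P) (x : ι → R) (r : P → R) :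
    packingShare R S (x, r) = Sum.elim r fun m => x m - ∑ p ∈ S m, r p :=
  rfl

lemma packingRec_packingShare (S : ι → Finset P) (x : ι → R) (r : P → R) :
    packingRec R S (packingShare R S (x, r)) = x := by
  ext m
  simp [packingRec, packingShare_apply]

end Scheme

section Conversion

open Finset

variable {R P V ι : Type*} [Fintype V] [DecidableEq P] [DecidableEq ι]

/-- The additive shares of the `i`-th secret given to each party of `packingShare`. They are indexed
by `V`, and the `v`-th one is labelled by `τ i v`, a point of the block `S i` or `none`. -/
def heldShares (S : ι → Finset P) (τ : ∀ i, V → (S i).insertNone) : P ⊕ ι → ι → Finset V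
  | .inl p, i => univ.filter fun v => (τ i v : Option P) = some p
  | .inr m, i =>
    if i = m then univ.filter fun v => (τ i v : Option P) = none
    else univ.filter fun v => (τ i v : Option P) ∈ (S m).map .some

lemma card_heldShares_le_one {S : ι → Finset P} {τ : ∀ i, V → (S i).insertNone}
    (hS : Pairwise fun i m => #(S i ∩ S m) ≤ 1) (hτ : ∀ i, Function.Injective (τ i))
    (j : P ⊕ ι) (i : ι) : #(heldShares S τ j i) ≤ 1 := by
  have label_injective : Function.Injective fun v => (τ i v : Option P) :=
    Subtype.val_injective.comp (hτ i)
  refine card_le_one.mpr fun v hv w hw => label_injective ?_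
  rcases j with p | m
  · simp_all [heldShares]
  by_cases him : i = m
  · simp_all [heldShares]
  simp only [heldShares, him, if_false, mem_filter, mem_univ, true_and, mem_map,
    Function.Embedding.some_apply] at hv hw
  obtain ⟨a, ha, hav⟩ := hv
  obtain ⟨b, hb, hbw⟩ := hw
  have ha' : a ∈ S i := some_mem_insertNone.mp (hav ▸ (τ i v).2)
  have hb' : b ∈ S i := some_mem_insertNone.mp (hbw ▸ (τ i w).2)
  have hab : a = b :=
    card_le_one.mp (hS him) a (mem_inter.mpr ⟨ha', ha⟩) b (mem_inter.mpr ⟨hb', hb⟩)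
  simp only [← hav, ← hbw, hab]

variable [Ring R]

variable (R) in
/-- The coefficient with which a party of `packingShare` counts the additive shares it holds of the
`i`-th secret when it converts its view to a share of the scheme. -/
def conversionWeight : P ⊕ ι → ι → R
  | .inl _, _ => 1
  | .inr m, i => if i = m then 1 else -1

lemma conversionWeight_mul_sum_heldShares_inr (S : ι → Finset P) (τ : ∀ i, V → (S i).insertNone)
    (f : V → R) (m i : ι) :
    conversionWeight (P := P) R (.inr m) i * ∑ v ∈ heldShares S τ (.inr m) i, f v =
      (if i = m then ∑ v, f v else 0) - ∑ p ∈ S m, ∑ v ∈ heldShares S τ (.inl p) i, f v := by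
  by_cases him : i = m
  · subst him
    have sum_by_label : ∑ v, f v = ∑ v with (τ i v : Option P) = none, f v +
        ∑ p ∈ S i, ∑ v with (τ i v : Option P) = some p, f v := by
      rw [← sum_fiberwise_of_maps_to (fun v _ => (τ i v).2), sum_insertNone]
    simp [conversionWeight, heldShares, sum_by_label]
  · have sum_by_label : ∑ v with (τ i v : Option P) ∈ (S m).map .some, f v =
        ∑ p ∈ S m, ∑ v with (τ i v : Option P) = some p, f v := by
      rw [← sum_fiberwise_eq_sum_filter, sum_map]
      rfl
    simp only [conversionWeight, heldShares, him, if_false, sum_by_label, neg_one_mul, zero_sub]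

lemma sum_conversionWeight_mul_sum_heldShares [Fintype ι] (S : ι → Finset P)
    (τ : ∀ i, V → (S i).insertNone) (y : ι → V → R) :
    (fun j => ∑ i, conversionWeight R j i * ∑ v ∈ heldShares S τ j i, y i v) =
      packingShare R S
        (fun i => ∑ v, y i v, fun p => ∑ i, ∑ v ∈ heldShares S τ (.inl p) i, y i v) := by
  ext (p | m)
  · simp [conversionWeight, packingShare_apply]
  · simp only [conversionWeight_mul_sum_heldShares_inr, sum_sub_distrib, sum_ite_eq', mem_univ,
      if_true, packingShare_apply, Sum.elim_inr]
    rw [sum_comm]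

end Conversion

section BlackBox

open Finset

lemma card_filter_exists_mem_le_card {J V : Type*} [Fintype V] [DecidableEq J]
    {A : V → Finset J} (hA : ∀ j, #{v | j ∈ A v} ≤ 1) (T : Finset J)
    [DecidablePred fun v => ∃ j ∈ T, j ∈ A v] :
    #{v | ∃ j ∈ T, j ∈ A v} ≤ #T := by
  classical
  have union_eq : ({v | ∃ j ∈ T, j ∈ A v} : Finset V) = T.biUnion fun j => {v | j ∈ A v} := by
    ext v
    simp
  simpa only [union_eq, mul_one] using card_biUnion_le_card_mul T _ 1 fun j _ => hA j

/-- The replication function under which party `σ j` is given the additive shares `D j i` of the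
`i`-th secret. -/
def replication {J ι V : Type*} [DecidableEq V] {k : ℕ} (σ : J ≃ Fin k) (D : J → ι → Finset V)
    (i : ι) (v : V) : Finset (Fin k) :=
  {j | v ∈ D (σ.symm j) i}

lemma filter_mem_replication {J ι V : Type*} [Fintype V] [DecidableEq V] {k : ℕ} (σ : J ≃ Fin k)
    (D : J → ι → Finset V) (i : ι) (j : Fin k) :
    ({v | j ∈ replication σ D i v} : Finset V) = D (σ.symm j) i := by
  ext v
  simp [replication]

lemma isBBTWith_replication {F : Type} [Field F] [Fintype F] {J : Type*} {t k k₀ ℓ e : ℕ}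
    (σ : J ≃ Fin k) (ht : t ≤ k₀ - 1)
    (share : ((Fin ℓ → F) × (Fin e → F)) →ₗ[F] (J → F)) (rec : (J → F) →ₗ[F] (Fin ℓ → F))
    (rec_share : ∀ x r, rec (share (x, r)) = x)
    (D : J → Fin ℓ → Finset (Fin k₀)) (hD : ∀ j i, #(D j i) ≤ 1) (w : J → Fin ℓ → F)
    (convert_eq : ∀ y : Fin ℓ → Fin k₀ → F, ∃ r,
      (fun j => ∑ i, w j i * ∑ v ∈ D j i, y i v) = share (fun i => ∑ v, y i v, r)) :
    IsBBTWith F t k k₀ ℓ (fun _ => 1) (replication σ D) := by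
  let E : (J → F) ≃ₗ[F] (Fin k → Fin 1 → F) :=
    LinearEquiv.funCongrLeft F F σ.symm ≪≫ₗ
      LinearEquiv.piCongrRight fun _ => (LinearEquiv.funUnique (Fin 1) F F).symm
  refine ⟨e, E ∘ₗ share, rec ∘ₗ E.symm,
    fun j z _ => ∑ i, w (σ.symm j) i * ∑ v, z i v, fun x r => ?_, fun y => ?_, fun T hT i => ?_⟩
  · simp [rec_share]
  · obtain ⟨r, hr⟩ := convert_eq y
    refine ⟨r, ?_⟩
    have sum_view (j : Fin k) (i : Fin ℓ) :
        ∑ v : {v // j ∈ replication σ D i v}, y i v = ∑ v ∈ D (σ.symm j) i, y i v :=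
      (sum_subtype _ (by simp [replication]) (y i)).symm
    rw [LinearMap.comp_apply, ← hr]
    ext j
    simp only [sum_view]
    rfl
  · have party_le_one (j : Fin k) : #{v | j ∈ replication σ D i v} ≤ 1 := by
      simpa only [filter_mem_replication] using hD (σ.symm j) i
    exact (card_filter_exists_mem_le_card party_le_one T).trans (hT.trans ht)

lemma div_sum_ones_eq_one_sub_div {q : ℕ} (hq : 0 < q) (ℓ : ℕ) :
    (ℓ : ℚ) / ∑ _j : Fin (q + ℓ), ((1 : ℕ) : ℚ) = 1 - (q : ℚ) / ((q : ℚ) + (ℓ : ℚ)) := by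
  have hne : (q : ℚ) + ℓ ≠ 0 := by positivity
  simp [one_sub_div hne]

theorem blackbox_from_packing_general (F : Type) [Field F] [Fintype F] (k₀ q ℓ : ℕ) (hq : 0 < q)
    (S : Fin ℓ → Finset (Fin q)) (hcard : ∀ i, k₀ ≤ #(S i) + 1)
    (hmeet : Pairwise fun i m => #(S i ∩ S m) ≤ 1) :
    ∃ (bs : Fin (q + ℓ) → ℕ) (ψ : Fin ℓ → Fin k₀ → Finset (Fin (q + ℓ))),
      IsBBTWith F (k₀ - 1) (q + ℓ) k₀ ℓ bs ψ ∧
      (ℓ : ℚ) / (∑ j, (bs j : ℚ)) = 1 - (q : ℚ) / ((q : ℚ) + (ℓ : ℚ)) ∧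
      ∀ j : Fin (q + ℓ), ∑ i : Fin ℓ, #{v : Fin k₀ | j ∈ ψ i v} ≤ ℓ := by
  have exists_labelling (i : Fin ℓ) : Nonempty (Fin k₀ ↪ (S i).insertNone) :=
    Function.Embedding.nonempty_of_card_le (by
      simpa only [Fintype.card_coe, Fintype.card_fin, card_insertNone] using hcard i)
  let τ (i : Fin ℓ) : Fin k₀ ↪ (S i).insertNone := (exists_labelling i).some
  let D := heldShares S fun i => τ i
  have hD : ∀ j i, #(D j i) ≤ 1 := card_heldShares_le_one hmeet fun i => (τ i).injective
  refine ⟨fun _ => 1, replication finSumFinEquiv D, ?_, div_sum_ones_eq_one_sub_div hq ℓ,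
    fun j => ?_⟩
  · exact isBBTWith_replication finSumFinEquiv le_rfl (packingShare F S) (packingRec F S)
      (packingRec_packingShare S) D hD (conversionWeight F)
      fun y => ⟨_, sum_conversionWeight_mul_sum_heldShares S _ y⟩
  · simp only [filter_mem_replication]
    simpa using sum_le_sum fun i (_ : i ∈ univ) => hD (finSumFinEquiv.symm j) i

end BlackBox

/-- **Black-box transformations from packing designs.**
Let `k₀ < q` be positive integers, `F` a finite field, and `𝒮` a family of
`(k₀−1)`-element subsets of `[q]` any two distinct members of which meet in at most one
element.  Then there is a black-box transformation with parameters
`(t = k₀−1, k = q + |𝒮|, k₀, ℓ = |𝒮|, F)` and rate `1 − q/(q + |𝒮|)`; moreover, it can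
be chosen so that `c_j ≤ |𝒮|` for every `j`. -/
theorem blackbox_from_packing (F : Type) [Field F] [Fintype F] (k₀ q : ℕ)
    (hk₀ : 0 < k₀) (hq : k₀ < q)
    (𝒮 : Finset (Finset (Fin q)))
    (hcard : ∀ S ∈ 𝒮, S.card = k₀ - 1)
    (hmeet : ∀ S₁ ∈ 𝒮, ∀ S₂ ∈ 𝒮, S₁ ≠ S₂ → (S₁ ∩ S₂).card ≤ 1) :
    ∃ (bs : Fin (q + 𝒮.card) → ℕ)
      (ψ : Fin 𝒮.card → Fin k₀ → Finset (Fin (q + 𝒮.card))),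
      IsBBTWith F (k₀ - 1) (q + 𝒮.card) k₀ 𝒮.card bs ψ ∧
      (𝒮.card : ℚ) / (∑ j, (bs j : ℚ)) = 1 - (q : ℚ) / ((q : ℚ) + (𝒮.card : ℚ)) ∧
      ∀ j : Fin (q + 𝒮.card),
        (∑ i : Fin 𝒮.card,
          (Finset.univ.filter (fun v : Fin k₀ => j ∈ ψ i v)).card) ≤ 𝒮.card := by
  let S (i : Fin 𝒮.card) : 𝒮 := 𝒮.equivFin.symm i
  exact blackbox_from_packing_general F k₀ q 𝒮.card (hk₀.trans hq) (fun i => (S i).1)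
    (fun i => by have := hcard _ (S i).2; omega) fun i m him =>
      hmeet _ (S i).2 _ (S m).2 fun h => him (𝒮.equivFin.symm.injective (Subtype.ext h))
end

section
/- Let F be a finite field with |F| > 3 and let α_1, α_2, α_3 be distinct nonzero elements of F. For (x_1, x_2) ∈ F², let D(x_1,x_2) be the probability distribution on F³ of the triple ( (x_1 + r_1α_1)(x_2 + r_2α_1), (x_1 + r_1α_2)(x_2 + r_2α_2), (x_1 + r_1α_3)(x_2 + r_2α_3) ), where r_1 and r_2 are independent and uniformly distributed in F. Then D(0,0) ≠ D(0,1), even though 0·0 = 0·1. -/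
/-! Over secrets `(0, x)` the share at `a ≠ 0` is `a` times the polynomial `r₁x + r₁r₂X` at `a`,
and two evaluation points determine that polynomial. Hence the outcome `x • α` with `x ≠ 0` forces
`r₁r₂ = 0` and leaves only `r = (1, 0)`, while over `(0, 0)` the polynomial `r₁r₂X` has no constant
term and cannot be the constant `x ≠ 0`. -/

/-- The output shares of the Shamir-based HSS for the product `x₁x₂`: server `j` multiplies its
shares `x₁ + r₁α_j` and `x₂ + r₂α_j`. The pair `r = (r₁, r₂)` is the dealer's randomness. -/
def shamirProductShares {ι R : Type*} [CommRing R] (α : ι → R) (x₁ x₂ : R) (r : R × R) : ι → R :=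
  fun j => (x₁ + r.1 * α j) * (x₂ + r.2 * α j)

section TwoEvaluationPoints

variable {ι R : Type*} [CommRing R] [NoZeroDivisors R] {α : ι → R} {i j : ι}

theorem eq_zero_and_eq_of_add_mul_eq {a b c s t : R} (hst : s ≠ t)
    (hs : a + b * s = c) (ht : a + b * t = c) : b = 0 ∧ a = c := by
  have hb : b = 0 := by
    have hmul : b * (s - t) = 0 := by linear_combination hs - ht
    exact (mul_eq_zero.mp hmul).resolve_right (sub_ne_zero.mpr hst)
  exact ⟨hb, by simpa only [hb, zero_mul, add_zero] using hs⟩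

theorem shamirProductShares_zero_left_eq_smul_iff (hi : α i ≠ 0) (hj : α j ≠ 0)
    (hij : α i ≠ α j) {x y : R} {r : R × R} :
    shamirProductShares α 0 x r = y • α ↔ r.1 * r.2 = 0 ∧ r.1 * x = y := by
  constructor
  · intro h
    have affine_eq (k : ι) (hk : α k ≠ 0) : r.1 * x + r.1 * r.2 * α k = y := by
      have hshare : (0 + r.1 * α k) * (x + r.2 * α k) = y * α k := congrFun h k
      exact mul_right_cancel₀ hk (by linear_combination hshare)
    exact eq_zero_and_eq_of_add_mul_eq hij (affine_eq i hi) (affine_eq j hj)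
  · rintro ⟨hmul, hx⟩
    funext k
    change (0 + r.1 * α k) * (x + r.2 * α k) = y * α k
    linear_combination α k ^ 2 * hmul + α k * hx

theorem shamirProductShares_zero_zero_ne_smul (hi : α i ≠ 0) (hj : α j ≠ 0)
    (hij : α i ≠ α j) {x : R} (hx : x ≠ 0) (r : R × R) :
    shamirProductShares α 0 0 r ≠ x • α := fun h =>
  hx (((shamirProductShares_zero_left_eq_smul_iff hi hj hij).mp h).2.symm.trans (mul_zero _))

theorem shamirProductShares_zero_left_eq_smul_self_iff (hi : α i ≠ 0) (hj : α j ≠ 0)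
    (hij : α i ≠ α j) {x : R} (hx : x ≠ 0) {r : R × R} :
    shamirProductShares α 0 x r = x • α ↔ r = (1, 0) := by
  rw [shamirProductShares_zero_left_eq_smul_iff hi hj hij, mul_eq_right₀ hx, Prod.ext_iff]
  constructor
  · rintro ⟨hmul, hone⟩
    exact ⟨hone, by simpa only [hone, one_mul] using hmul⟩
  · rintro ⟨hone, hzero⟩
    exact ⟨mul_eq_zero_of_right _ hzero, hone⟩

theorem shamir_hss_not_symmetrically_private_general (hi : α i ≠ 0) (hj : α j ≠ 0)
    (hij : α i ≠ α j) {x : R} (hx : x ≠ 0) :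
    ¬ ∀ y : ι → R, Nat.card {r : R × R // shamirProductShares α 0 0 r = y} =
      Nat.card {r : R × R // shamirProductShares α 0 x r = y} := by
  intro h
  have card_zero : Nat.card {r : R × R // shamirProductShares α 0 0 r = x • α} = 0 := by
    have := Subtype.isEmpty_of_false (shamirProductShares_zero_zero_ne_smul hi hj hij hx)
    exact Nat.card_of_isEmpty
  have card_one : Nat.card {r : R × R // shamirProductShares α 0 x r = x • α} = 1 := by
    simp only [shamirProductShares_zero_left_eq_smul_self_iff hi hj hij hx, Nat.card_unique]
  exact zero_ne_one (card_zero.symm.trans ((h (x • α)).trans card_one))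

end TwoEvaluationPoints

/-- **Shamir-based multiplicative HSS is not symmetrically private.**
Let `F` be a finite field with `|F| > 3` and `α_1, α_2, α_3` distinct nonzero elements of
`F`.  For `(x_1, x_2) ∈ F²`, the output shares of the 1-private 3-server Shamir-based HSS
for the product are `((x_1 + r_1 α_j)(x_2 + r_2 α_j))_{j ∈ [3]}` with `r_1, r_2` uniform
and independent in `F`.  The distributions of this triple for secrets `(0,0)` and `(0,1)`
differ (as witnessed by some outcome having different counts of randomness pairs), even
though `0·0 = 0·1`. -/
theorem shamir_hss_not_symmetrically_private (F : Type) [Field F] [Fintype F]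
    (hF : 3 < Fintype.card F)
    (α : Fin 3 → F) (hinj : Function.Injective α) (hne : ∀ j, α j ≠ 0) :
    ¬ ∀ y : Fin 3 → F,
        Nat.card {r : F × F //
            (fun j => ((0 : F) + r.1 * α j) * ((0 : F) + r.2 * α j)) = y} =
          Nat.card {r : F × F //
            (fun j => ((0 : F) + r.1 * α j) * ((1 : F) + r.2 * α j)) = y} :=
  shamir_hss_not_symmetrically_private_general (hne 0) (hne 1) (hinj.ne zero_ne_one)
    one_ne_zero
end

section
/- Let F be a finite field. For (α, β) ∈ F², let D(α,β) be the probability distribution on F³ of the triple (y_1, y_2, y_3) defined by: choose (a_1, a_2, b_1, b_2) uniformly at random in F⁴, set a_3 = α − a_1 − a_2 and b_3 = β − b_1 − b_2, and let y_1 = (a_2 + a_3)(b_2 + b_3), y_2 = a_1 b_1 + a_1 b_3 + a_3 b_1, y_3 = a_1 b_2 + a_2 b_1. Then for all (α, β), (α', β') ∈ F² with α·β = α'·β', we have D(α,β) = D(α',β'). -/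
/-!
Write `x = (α, β)`, `x' = (α', β')`, `p = (a₁, b₁)` and `q = (a₂, b₂)`. The first share is the
product of the entries of `x - p`, the third share is a linear form `L p` evaluated at `q`, and the
second share is `α * β` minus the other two. Let `σ` be the bijection for which `x' - σ p` is the
image of `x - p` under the transposition of `x` and `x'`. It preserves the first share because
`α * β = α' * β'`, and it fixes `0`, the only point `p` where `L p` vanishes. Any two nonzero linear
forms differ by a linear automorphism, so `q` can be transformed, depending on `p`, in such a way
that the third share is preserved too.
-/

/-- The output shares of the 1-private 3-server Greedy Monomial CNF HSS for the product
`α·β`, as a function of the free additive shares `a₁, a₂, b₁, b₂` (with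
`a₃ = α − a₁ − a₂` and `b₃ = β − b₁ − b₂`). -/
def greedyCNFShares (F : Type) [Field F] (α β a₁ a₂ b₁ b₂ : F) : Fin 3 → F :=
  ![(a₂ + (α - a₁ - a₂)) * (b₂ + (β - b₁ - b₂)),
    a₁ * b₁ + a₁ * (β - b₁ - b₂) + (α - a₁ - a₂) * b₁,
    a₁ * b₂ + a₂ * b₁]

theorem exists_apply_ne_zero_and_apply_ne_zero {A B M N P : Type*} [Add M] [AddZeroClass N]
    [AddZeroClass P] [FunLike A M N] [AddHomClass A M N] [FunLike B M P] [AddHomClass B M P]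
    {f : A} {g : B} (hf : ∃ x, f x ≠ 0) (hg : ∃ y, g y ≠ 0) :
    ∃ v, f v ≠ 0 ∧ g v ≠ 0 := by
  obtain ⟨x, hfx⟩ := hf
  obtain ⟨y, hgy⟩ := hg
  by_cases hgx : g x = 0
  · by_cases hfy : f y = 0
    · exact ⟨x + y, by simpa [hfy] using hfx, by simpa [hgx] using hgy⟩
    · exact ⟨y, hfy, hgy⟩
  · exact ⟨x, hfx, hgx⟩

theorem exists_linearEquiv_dual_apply_eq {K V : Type*} [DivisionRing K] [AddCommGroup V]
    [Module K V] {f g : Module.Dual K V} (h : f = 0 ↔ g = 0) :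
    ∃ e : V ≃ₗ[K] V, ∀ v, g (e v) = f v := by
  by_cases hf : f = 0
  · exact ⟨LinearEquiv.refl K V, by simp [hf, h.mp hf]⟩
  · obtain ⟨w, hfw, hgw⟩ : ∃ w, f w ≠ 0 ∧ g w ≠ 0 :=
      exists_apply_ne_zero_and_apply_ne_zero (DFunLike.ne_iff.mp hf)
        (DFunLike.ne_iff.mp (mt h.mpr hf))
    -- `v ↦ v + (f v - g v) • (g w)⁻¹ • w` corrects the value of `g` to that of `f`.
    have hunit : IsUnit (1 + (f - g) ((g w)⁻¹ • w)) := by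
      have hscale : 1 + (f - g) ((g w)⁻¹ • w) = (g w)⁻¹ * f w := by simp [mul_sub, hgw]
      exact hscale ▸ (mul_ne_zero (inv_ne_zero hgw) hfw).isUnit
    refine ⟨LinearEquiv.dilatransvection hunit, fun v => ?_⟩
    simp [LinearEquiv.dilatransvection.apply, hgw]

theorem exists_perm_zero_fixed_apply_sub_eq {G X : Type*} [AddGroup G] {φ : G → X} {x y : G}
    (h : φ x = φ y) : ∃ σ : Equiv.Perm G, σ 0 = 0 ∧ ∀ p, φ (y - σ p) = φ (x - p) := by
  classical
  refine ⟨(Equiv.subLeft x).trans ((Equiv.swap x y).trans (Equiv.subLeft y).symm), ?_, fun p => ?_⟩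
  · simp
  · calc φ (y - _) = φ (Equiv.swap x y (x - p)) := congrArg φ ((Equiv.subLeft y).apply_symm_apply _)
      _ = φ (x - p) := Equiv.apply_swap_eq_self h _

/-- The third output share `a₁b₂ + a₂b₁` as a linear form in the pair `(a₂, b₂)`, for a given pair
`p = (a₁, b₁)`. -/
def thirdShareForm {R : Type*} [CommSemiring R] (p : R × R) : Module.Dual R (R × R) :=
  p.1 • LinearMap.snd R R R + p.2 • LinearMap.fst R R R

theorem thirdShareForm_apply {R : Type*} [CommSemiring R] (p q : R × R) :
    thirdShareForm p q = p.1 * q.2 + p.2 * q.1 :=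
  rfl

theorem thirdShareForm_eq_zero_iff {R : Type*} [CommSemiring R] {p : R × R} :
    thirdShareForm p = 0 ↔ p = 0 := by
  refine ⟨fun h => Prod.ext ?_ ?_, fun h => by simp [thirdShareForm, h]⟩
  · simpa [thirdShareForm_apply] using LinearMap.congr_fun h (0, 1)
  · simpa [thirdShareForm_apply] using LinearMap.congr_fun h (1, 0)

theorem greedyCNFShares_eq_thirdShareForm {F : Type} [Field F] (α β a₁ a₂ b₁ b₂ : F) :
    greedyCNFShares F α β a₁ a₂ b₁ b₂ =
      ![(α - a₁) * (β - b₁),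
        α * β - (α - a₁) * (β - b₁) - thirdShareForm (a₁, b₁) (a₂, b₂),
        thirdShareForm (a₁, b₁) (a₂, b₂)] := by
  have first : (a₂ + (α - a₁ - a₂)) * (b₂ + (β - b₁ - b₂)) = (α - a₁) * (β - b₁) := by ring
  have third : a₁ * b₂ + a₂ * b₁ = thirdShareForm (a₁, b₁) (a₂, b₂) := by
    rw [thirdShareForm_apply, mul_comm a₂]
  have second : a₁ * b₁ + a₁ * (β - b₁ - b₂) + (α - a₁ - a₂) * b₁ =
      α * β - (α - a₁) * (β - b₁) - thirdShareForm (a₁, b₁) (a₂, b₂) := by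
    rw [← third]
    ring
  rw [greedyCNFShares, first, second, third]

theorem greedy_cnf_hss_symmetrically_private_general (F : Type) [Field F] (α β α' β' : F)
    (h : α * β = α' * β') :
    ∃ e : Equiv.Perm (F × F × F × F), ∀ v,
      greedyCNFShares F α' β' (e v).1 (e v).2.1 (e v).2.2.1 (e v).2.2.2 =
        greedyCNFShares F α β v.1 v.2.1 v.2.2.1 v.2.2.2 := by
  obtain ⟨σ, σ_zero, σ_first⟩ := exists_perm_zero_fixed_apply_sub_eq
    (φ := fun w : F × F => w.1 * w.2) (x := (α, β)) (y := (α', β')) h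
  have form_eq_zero_iff (p : F × F) : thirdShareForm p = 0 ↔ thirdShareForm (σ p) = 0 := by
    rw [thirdShareForm_eq_zero_iff, thirdShareForm_eq_zero_iff, σ.injective.eq_iff' σ_zero]
  choose τ τ_third using fun p => exists_linearEquiv_dual_apply_eq (form_eq_zero_iff p)
  -- `(a₁, a₂, b₁, b₂) ↦ ((a₁, b₁), (a₂, b₂))`
  let regroup : F × F × F × F ≃ (F × F) × F × F :=
    (Equiv.prodAssoc F F (F × F)).symm.trans (Equiv.prodProdProdComm F F F F)
  let shear : Equiv.Perm ((F × F) × F × F) := Equiv.prodShear σ fun p => (τ p).toEquiv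
  refine ⟨(regroup.trans shear).trans regroup.symm, fun ⟨a₁, a₂, b₁, b₂⟩ => ?_⟩
  have first_eq : (α' - (σ (a₁, b₁)).1) * (β' - (σ (a₁, b₁)).2) = (α - a₁) * (β - b₁) :=
    σ_first (a₁, b₁)
  change greedyCNFShares F α' β' (σ (a₁, b₁)).1 (τ (a₁, b₁) (a₂, b₂)).1 (σ (a₁, b₁)).2
    (τ (a₁, b₁) (a₂, b₂)).2 = greedyCNFShares F α β a₁ a₂ b₁ b₂
  rw [greedyCNFShares_eq_thirdShareForm, greedyCNFShares_eq_thirdShareForm, first_eq, τ_third, h]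

/-- **The Greedy Monomial CNF HSS for products is symmetrically private.**
For any finite field `F` and any `(α, β), (α', β') ∈ F²` with `α·β = α'·β'`, the
distribution of the output-share triple `(y₁, y₂, y₃)` — over uniformly random
`(a₁, a₂, b₁, b₂) ∈ F⁴`, with `a₃ = α − a₁ − a₂`, `b₃ = β − b₁ − b₂`,
`y₁ = (a₂ + a₃)(b₂ + b₃)`, `y₂ = a₁b₁ + a₁b₃ + a₃b₁`, `y₃ = a₁b₂ + a₂b₁` — is the same
for `(α, β)` and `(α', β')`: every outcome is attained by equally many choices of the
randomness. -/
theorem greedy_cnf_hss_symmetrically_private (F : Type) [Field F] [Fintype F]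
    (α β α' β' : F) (h : α * β = α' * β') :
    ∀ y : Fin 3 → F,
      Nat.card {v : F × F × F × F //
          greedyCNFShares F α β v.1 v.2.1 v.2.2.1 v.2.2.2 = y} =
        Nat.card {v : F × F × F × F //
          greedyCNFShares F α' β' v.1 v.2.1 v.2.2.1 v.2.2.2 = y} := by
  obtain ⟨e, he⟩ := greedy_cnf_hss_symmetrically_private_general F α β α' β' h
  exact fun y => Nat.card_congr (e.subtypeEquiv fun v => by rw [he])
end
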